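/- arXiv:2604.25341 — 2 statements merged into one kernel-verified Lean document; each statement's English description precedes it below -/
import Mathlib

section
/- For every tree T of order n ≥ 3, σ_t(T) ≤ (n − 2) · σ(T). -/
open Finset
open scoped Classical

noncomputable section

variable {V : Type*}

/-- Albertson irregularity: `∑_{uv ∈ E} |d(u) - d(v)|` (as an integer). -/
def irr [Fintype V] (G : SimpleGraph V) : ℤ :=
  ∑ e ∈ G.edgeFinset,
    Sym2.lift ⟨fun u v => |(G.degree u : ℤ) - (G.degree v : ℤ)|,
      fun u v => by simp only []; rw [abs_sub_comm]⟩ e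

/-- `σ(G) = ∑_{uv ∈ E} (d(u) - d(v))²`. -/
def sigmaE [Fintype V] (G : SimpleGraph V) : ℤ :=
  ∑ e ∈ G.edgeFinset,
    Sym2.lift ⟨fun u v => ((G.degree u : ℤ) - (G.degree v : ℤ)) ^ 2,
      fun u v => by simp only []; ring⟩ e

/-- `σ_t(G) = ∑_{{u,v} ⊆ V, u ≠ v} (d(u) - d(v))²`, over unordered pairs of distinct vertices. -/
def sigmaT [Fintype V] (G : SimpleGraph V) : ℤ :=
  ∑ p ∈ (Finset.univ : Finset V).sym2.filter (fun p => ¬ p.IsDiag),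
    Sym2.lift ⟨fun u v => ((G.degree u : ℤ) - (G.degree v : ℤ)) ^ 2,
      fun u v => by simp only []; ring⟩ p

/-- Degree variance `Var(G) = (1/n) ∑_v (d(v) - 2m/n)²`. -/
def degVar [Fintype V] (G : SimpleGraph V) : ℝ :=
  (∑ v : V, ((G.degree v : ℝ) - 2 * (G.edgeFinset.card : ℝ) / (Fintype.card V : ℝ)) ^ 2) /
    (Fintype.card V : ℝ)

end

/-!
Root the tree at a vertex `r` of maximum degree `Δ` and send each `v ≠ r` to the edge joining it to
its parent. This is a bijection onto the edges, and the smaller degree on an edge is at most the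
degree of the chosen endpoint, so the minima over the edges sum to at most `∑ d(v) - Δ`. Since
`|a - b| = a + b - 2 min a b`, this gives `irr(T) ≥ ∑ d(v)² - 2 ∑ d(v) + 2 Δ`. On the other hand
`σ_t(T) = n ∑ d(v)² - (∑ d(v))²` with `∑ d(v) = 2n - 2`, and `1 ≤ d(v) ≤ Δ` bounds `∑ d(v)²` by
`(Δ + 1)(2n - 2) - n Δ`. Together these give the sharper `σ_t(T) ≤ (n - 2) irr(T)`, and
`irr(T) ≤ σ(T)` because `|x| ≤ x²` for integers.
-/

theorem sum_sq_add_card_mul_le {ι R : Type*} [CommRing R] [PartialOrder R] [IsOrderedRing R]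
    {s : Finset ι} {f : ι → R} {a b : R} (ha : ∀ i ∈ s, a ≤ f i) (hb : ∀ i ∈ s, f i ≤ b) :
    ∑ i ∈ s, f i ^ 2 + #s * (a * b) ≤ (a + b) * ∑ i ∈ s, f i := by
  rw [← nsmul_eq_mul, ← sum_const, ← sum_add_distrib, mul_sum]
  refine sum_le_sum fun i hi => sub_nonneg.1 ?_
  have h : 0 ≤ (f i - a) * (b - f i) :=
    mul_nonneg (sub_nonneg.2 (ha i hi)) (sub_nonneg.2 (hb i hi))
  linear_combination h

theorem exists_adj_dist_lt_of_reachable {V : Type*} {G : SimpleGraph V} {r v : V}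
    (h : G.Reachable v r) (hv : v ≠ r) : ∃ w, G.Adj v w ∧ G.dist w r < G.dist v r := by
  obtain ⟨p, hp⟩ := h.exists_walk_length_eq_dist
  cases p with
  | nil => exact absurd rfl hv
  | @cons _ w _ hadj q =>
    refine ⟨w, hadj, ?_⟩
    rw [← hp, SimpleGraph.Walk.length_cons]
    exact Nat.lt_succ_of_le (SimpleGraph.dist_le q)

section Graph

variable {V : Type*} [Fintype V] {M : Type*} {G : SimpleGraph V}

theorem sum_edgeFinset_sum_toFinset [AddCommMonoid M] (G : SimpleGraph V) [DecidableRel G.Adj]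
    (f : V → M) :
    ∑ e ∈ G.edgeFinset, ∑ v ∈ e.toFinset, f v = ∑ v, G.degree v • f v := by
  simp only [← G.card_incidenceFinset_eq_degree, ← sum_const]
  refine sum_comm' fun e v => ?_
  simp [SimpleGraph.incidenceSet]

theorem filter_not_isDiag_sym2_univ :
    (univ : Finset V).sym2.filter (fun p => ¬ p.IsDiag) = (⊤ : SimpleGraph V).edgeFinset := by
  ext p
  simp

theorem sum_sym2_sub_sq {R : Type*} [CommRing R] (f : V → R) :
    ∑ p ∈ (univ : Finset V).sym2 with ¬ p.IsDiag,
        Sym2.lift ⟨fun u v => (f u - f v) ^ 2, fun u v => by ring⟩ p =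
      Fintype.card V * ∑ v, f v ^ 2 - (∑ v, f v) ^ 2 := by
  have hsq : ∑ p ∈ (univ : Finset V).sym2 with ¬ p.IsDiag, ∑ v ∈ p.toFinset, f v ^ 2 =
      (Fintype.card V - 1) * ∑ v, f v ^ 2 := by
    rw [filter_not_isDiag_sym2_univ, sum_edgeFinset_sum_toFinset, mul_sum]
    refine sum_congr rfl fun v _ => ?_
    rw [SimpleGraph.complete_graph_degree, nsmul_eq_mul,
      Nat.cast_pred (Fintype.card_pos_iff.2 ⟨v⟩)]
  -- The polar form of squaring is `2 * f u * f v`, so this expands `(∑ v, f v) ^ 2`.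
  have hpolar := (QuadraticMap.sq (R := R)).map_sum univ f
  simp only [QuadraticMap.sq_apply, ← sq] at hpolar
  have hlift : ∀ p ∈ (univ : Finset V).sym2.filter (fun p => ¬ p.IsDiag),
      Sym2.lift ⟨fun u v => (f u - f v) ^ 2, fun u v => by ring⟩ p =
        ∑ v ∈ p.toFinset, f v ^ 2 -
          QuadraticMap.polarSym2 (QuadraticMap.sq (R := R)) (p.map f) := by
    rintro ⟨u, v⟩ hp
    have huv : u ≠ v := by simpa using hp
    simp only [Sym2.lift_mk, Sym2.toFinset_mk_eq, sum_pair huv, Sym2.map_mk,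
      QuadraticMap.polarSym2_sym2Mk, QuadraticMap.polar, QuadraticMap.sq_apply]
    ring
  rw [sum_congr rfl hlift, sum_sub_distrib, hsq]
  linear_combination hpolar

theorem sum_edgeFinset_abs_sub [AddCommGroup M] [LinearOrder M] [IsOrderedAddMonoid M]
    (G : SimpleGraph V) [DecidableRel G.Adj] (f : V → M) :
    ∑ e ∈ G.edgeFinset, Sym2.lift ⟨fun u v => |f u - f v|, fun u v => abs_sub_comm _ _⟩ e =
      ∑ v, G.degree v • f v - 2 • ∑ e ∈ G.edgeFinset, (e.map f).inf := by
  rw [← sum_edgeFinset_sum_toFinset, smul_sum, ← sum_sub_distrib]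
  refine sum_congr rfl fun e he => ?_
  induction e with | _ u v
  have huv : u ≠ v := SimpleGraph.Adj.ne (by simpa using he)
  simp only [Sym2.lift_mk, Sym2.toFinset_mk_eq, sum_pair huv, Sym2.map_mk, Sym2.inf_mk]
  rw [two_nsmul_inf_eq_add_sub_abs_sub, sub_sub_cancel, abs_sub_comm]

theorem exists_bijOn_edgeFinset_of_isTree [DecidableRel G.Adj] (hG : G.IsTree) (r : V) :
    ∃ φ : V → Sym2 V, Set.BijOn φ ({r}ᶜ : Finset V) G.edgeFinset ∧ ∀ v ≠ r, v ∈ φ v := by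
  choose! parent hadj hdist using
    fun v (hv : v ≠ r) => exists_adj_dist_lt_of_reachable (hG.connected v r) hv
  have hmaps : Set.MapsTo (fun v => s(v, parent v)) ({r}ᶜ : Finset V) G.edgeFinset := by
    intro v hv
    simpa using hadj v (by simpa using hv)
  have hinj : Set.InjOn (fun v => s(v, parent v)) ({r}ᶜ : Finset V) := by
    intro v hv w hw h
    have hvd := hdist v (by simpa using hv)
    have hwd := hdist w (by simpa using hw)
    rcases Sym2.eq_iff.1 h with ⟨hvw, -⟩ | ⟨hvw, hwv⟩
    · exact hvw
    · rw [hwv] at hvd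
      rw [← hvw] at hwd
      exact absurd hvd hwd.asymm
  have hcard : #G.edgeFinset ≤ #({r}ᶜ : Finset V) := by
    rw [card_compl, card_singleton, ← hG.card_edgeFinset, Nat.add_sub_cancel]
  exact ⟨fun v => s(v, parent v),
    ⟨hmaps, hinj, surjOn_of_injOn_of_card_le _ hmaps hinj hcard⟩, fun v _ => Sym2.mem_mk_left _ _⟩

theorem sum_edgeFinset_inf_add_le_of_isTree [AddCommMonoid M] [SemilatticeInf M]
    [IsOrderedAddMonoid M] [DecidableRel G.Adj] (hG : G.IsTree) (f : V → M) (r : V) :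
    ∑ e ∈ G.edgeFinset, (e.map f).inf + f r ≤ ∑ v, f v := by
  obtain ⟨φ, ⟨hmaps, hinj, hsurj⟩, hmem⟩ := exists_bijOn_edgeFinset_of_isTree hG r
  have hinf : ∀ e : Sym2 V, ∀ v ∈ e, (e.map f).inf ≤ f v := by
    rintro ⟨u, w⟩ v hv
    rcases Sym2.mem_iff.1 hv with rfl | rfl
    exacts [inf_le_left, inf_le_right]
  rw [← sum_nbij φ hmaps hinj hsurj fun _ _ => rfl, ← sum_compl_add_sum {r} f, sum_singleton]
  gcongr with v hv
  exact hinf _ _ (hmem v (by simpa using hv))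

theorem sum_degree_of_isTree [DecidableRel G.Adj] (hG : G.IsTree) :
    ∑ v, (G.degree v : ℤ) = 2 * Fintype.card V - 2 := by
  have hdeg := G.sum_degrees_eq_twice_card_edges
  have hcard := hG.card_edgeFinset
  zify at hdeg hcard
  rw [hdeg]
  linear_combination 2 * hcard

theorem sigmaT_eq_card_mul_sum_sq_sub (G : SimpleGraph V) :
    sigmaT G = Fintype.card V * ∑ v, (G.degree v : ℤ) ^ 2 - (∑ v, (G.degree v : ℤ)) ^ 2 :=
  sum_sym2_sub_sq fun v => (G.degree v : ℤ)

theorem irr_le_sigmaE (G : SimpleGraph V) : irr G ≤ sigmaE G := by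
  refine sum_le_sum fun e _ => ?_
  induction e with | _ u v
  exact (Int.le_self_sq _).trans_eq (sq_abs _)

theorem sum_degree_sq_sub_le_irr_of_isTree (hG : G.IsTree) (r : V) :
    ∑ v, (G.degree v : ℤ) ^ 2 - 2 * (∑ v, (G.degree v : ℤ) - G.degree r) ≤ irr G := by
  have hirr : irr G = ∑ v, (G.degree v : ℤ) ^ 2 -
      2 * ∑ e ∈ G.edgeFinset, (e.map fun v => (G.degree v : ℤ)).inf := by
    refine (sum_edgeFinset_abs_sub G fun v => (G.degree v : ℤ)).trans ?_
    simp only [nsmul_eq_mul, ← sq, Nat.cast_ofNat]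
  have hinf := sum_edgeFinset_inf_add_le_of_isTree hG (fun v => (G.degree v : ℤ)) r
  linarith

theorem sum_degree_sq_le_of_isTree [Nontrivial V] [DecidableRel G.Adj] (hG : G.IsTree) :
    ∑ v, (G.degree v : ℤ) ^ 2 ≤
      2 * (Fintype.card V - 1) + (Fintype.card V - 2) * G.maxDegree := by
  have hpos : ∀ v ∈ univ, 1 ≤ (G.degree v : ℤ) := fun v _ => by
    exact_mod_cast hG.connected.preconnected.degree_pos_of_nontrivial v
  have hmax : ∀ v ∈ univ, (G.degree v : ℤ) ≤ G.maxDegree := fun v _ => by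
    exact_mod_cast G.degree_le_maxDegree v
  have hsq := sum_sq_add_card_mul_le hpos hmax
  rw [sum_degree_of_isTree hG, card_univ] at hsq
  linarith

theorem sigmaT_le_mul_irr_of_isTree [Nontrivial V] (hG : G.IsTree) :
    sigmaT G ≤ ((Fintype.card V : ℤ) - 2) * irr G := by
  obtain ⟨r, hr⟩ := G.exists_maximal_degree_vertex
  have hcard : (2 : ℤ) ≤ Fintype.card V := by exact_mod_cast Fintype.one_lt_card (α := V)
  have hirr := sum_degree_sq_sub_le_irr_of_isTree hG r
  have hsq := sum_degree_sq_le_of_isTree hG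
  rw [sum_degree_of_isTree hG, ← hr] at hirr
  rw [sigmaT_eq_card_mul_sum_sq_sub, sum_degree_of_isTree hG]
  have hmul := mul_le_mul_of_nonneg_left hirr (sub_nonneg.2 hcard)
  linarith

end Graph

/-- For every tree `T` of order `n ≥ 3`, `σ_t(T) ≤ (n-2) · σ(T)`. -/
theorem stmt1 {V : Type*} [Fintype V] (G : SimpleGraph V) (hT : G.IsTree)
    (hn : 3 ≤ Fintype.card V) :
    sigmaT G ≤ ((Fintype.card V : ℤ) - 2) * sigmaE G := by
  have : Nontrivial V := Fintype.one_lt_card_iff_nontrivial.1 (by omega)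
  have hcard : (0 : ℤ) ≤ Fintype.card V - 2 := by omega
  calc
    sigmaT G ≤ (Fintype.card V - 2) * irr G := sigmaT_le_mul_irr_of_isTree hT
    _ ≤ (Fintype.card V - 2) * sigmaE G := mul_le_mul_of_nonneg_left (irr_le_sigmaE G) hcard
end

section
/- For every connected finite simple graph G of order n with maximum degree Δ and minimum degree δ, σ(G) ≥ (Δ − δ)² / √(6n). -/
open Finset
open scoped Classical

/-!
A shortest walk between two vertices visits each distance level once, so every vertex is adjacent to
at most three vertices of the walk, and the degrees along it sum to at most `3n`. It remains to
bound below the sum of the squared steps `s` of an integer sequence that falls from `D` to `0`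
inside `[0, D]` and has sum at most `A`. If `m ∈ [0, D]` is the midpoint of a step and `c` is real,
`(D - m) (s² - s) + m (s - c)² ≥ 0`: the first term is nonnegative because `s` is an integer. In
this inequality `s` and `m s` telescope while the sum of the `m` is at most `A`. With
`c = D² / (2A)` the squares sum to at least `D / 2 + D³ / (4A)`, which is at least `D² / √(2A)` by
the inequality of arithmetic and geometric means. Take `A = 3n`.
-/

section Sequence

/-- The potential of a descent from `D` to `0`: its drop from `a` to `b` is what telescopes when
`(2 * D - (a + b)) * (s ^ 2 - s) + (a + b) * (s - c) ^ 2` is expanded with `s = a - b`. The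
parameter `c` is the step size at height `D` for which no slack is left. -/
def descentPotential {K : Type*} [CommRing K] (D c y : K) : K :=
  2 * D * y + (2 * c - 1) * y ^ 2

variable {K : Type*}

section OrderedRing

variable [CommRing K] [LinearOrder K] [IsStrictOrderedRing K]

lemma descentPotential_sub_le {a b D : K} (c : K) (ha : a ∈ Set.Icc 0 D) (hb : b ∈ Set.Icc 0 D)
    (hab : a - b ≤ (a - b) ^ 2) :
    descentPotential D c a - descentPotential D c b ≤
      2 * D * (a - b) ^ 2 + c ^ 2 * (a + b) := by
  have hlow : 0 ≤ (2 * D - (a + b)) * ((a - b) ^ 2 - (a - b)) :=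
    mul_nonneg (by linarith [ha.2, hb.2]) (sub_nonneg.2 hab)
  have hhigh : 0 ≤ (a + b) * (a - b - c) ^ 2 :=
    mul_nonneg (add_nonneg ha.1 hb.1) (sq_nonneg _)
  unfold descentPotential
  linarith

variable {L : ℕ} {x : ℕ → K}

lemma sum_range_add_succ_le_two_mul_sum (h0 : 0 ≤ x 0) (hL : 0 ≤ x L) :
    ∑ i ∈ range L, (x i + x (i + 1)) ≤ 2 * ∑ i ∈ range (L + 1), x i := by
  rw [sum_add_distrib]
  linarith [sum_range_succ x L, sum_range_succ' x L]

lemma two_mul_add_one_mul_sq_le_sum_sq_sub {A : K} (c : K)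
    (hx : ∀ i ≤ L, x i ∈ Set.Icc 0 (x 0)) (hL : x L = 0)
    (hstep : ∀ i < L, x i - x (i + 1) ≤ (x i - x (i + 1)) ^ 2)
    (hsum : ∑ i ∈ range (L + 1), x i ≤ A) :
    (2 * c + 1) * x 0 ^ 2 ≤
      2 * x 0 * ∑ i ∈ range L, (x i - x (i + 1)) ^ 2 + c ^ 2 * (2 * A) := by
  let F : K → K := descentPotential (x 0) c
  have hmid : ∑ i ∈ range L, (x i + x (i + 1)) ≤ 2 * A :=
    (sum_range_add_succ_le_two_mul_sum (hx 0 L.zero_le).1 hL.ge).trans (by linarith)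
  calc
    (2 * c + 1) * x 0 ^ 2 = F (x 0) - F (x L) := by simp only [F, descentPotential, hL]; ring
    _ = ∑ i ∈ range L, (F (x i) - F (x (i + 1))) := (sum_range_sub' (fun i ↦ F (x i)) L).symm
    _ ≤ ∑ i ∈ range L, (2 * x 0 * (x i - x (i + 1)) ^ 2 + c ^ 2 * (x i + x (i + 1))) := by
      refine sum_le_sum fun i hi ↦ ?_
      have hi' : i < L := mem_range.1 hi
      exact descentPotential_sub_le c (hx i hi'.le) (hx (i + 1) hi') (hstep i hi')
    _ = 2 * x 0 * ∑ i ∈ range L, (x i - x (i + 1)) ^ 2 +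
          c ^ 2 * ∑ i ∈ range L, (x i + x (i + 1)) := by
      rw [sum_add_distrib, mul_sum, mul_sum]
    _ ≤ _ := by gcongr

end OrderedRing

section OrderedField

variable [Field K] [LinearOrder K] [IsStrictOrderedRing K] {L : ℕ}

lemma half_add_cube_div_le_sum_sq_sub {x : ℕ → K} {A : K}
    (hA : 0 < A) (hx : ∀ i ≤ L, x i ∈ Set.Icc 0 (x 0)) (hL : x L = 0)
    (hstep : ∀ i < L, x i - x (i + 1) ≤ (x i - x (i + 1)) ^ 2)
    (hsum : ∑ i ∈ range (L + 1), x i ≤ A) :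
    x 0 / 2 + x 0 ^ 3 / (4 * A) ≤ ∑ i ∈ range L, (x i - x (i + 1)) ^ 2 := by
  rcases (hx 0 L.zero_le).1.eq_or_lt with h0 | h0
  · rw [← h0]
    simpa using sum_nonneg fun i (_ : i ∈ range L) ↦ sq_nonneg (x i - x (i + 1))
  refine le_of_mul_le_mul_left ?_ (mul_pos two_pos h0)
  have hc := two_mul_add_one_mul_sq_le_sum_sq_sub (x 0 ^ 2 / (2 * A)) hx hL hstep hsum
  have hopt : 2 * x 0 * (x 0 / 2 + x 0 ^ 3 / (4 * A)) =
      (2 * (x 0 ^ 2 / (2 * A)) + 1) * x 0 ^ 2 - (x 0 ^ 2 / (2 * A)) ^ 2 * (2 * A) := by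
    field_simp
    ring
  linarith

lemma half_add_cube_div_le_intCast_sum_sq_sub
    {z : ℕ → ℤ} {a b A : ℤ} (h0 : z 0 = a) (hL : z L = b) (hb : 0 ≤ b) (hA : 0 < A)
    (hz : ∀ i ≤ L, z i ∈ Set.Icc b a) (hsum : ∑ i ∈ range (L + 1), z i ≤ A) :
    ((a : K) - b) / 2 + ((a : K) - b) ^ 3 / (4 * A) ≤
      (∑ i ∈ range L, (z i - z (i + 1)) ^ 2 : ℤ) := by
  let x : ℕ → K := fun i ↦ ((z i - b : ℤ) : K)
  have hx0 : x 0 = a - b := by simp only [x, h0, Int.cast_sub]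
  have hxL : x L = 0 := by simp only [x, hL, sub_self, Int.cast_zero]
  have hdiff (i : ℕ) : x i - x (i + 1) = ((z i - z (i + 1) : ℤ) : K) := by
    simp only [x, ← Int.cast_sub, sub_sub_sub_cancel_right]
  have hx : ∀ i ≤ L, x i ∈ Set.Icc 0 (x 0) := fun i hi ↦
    ⟨Int.cast_nonneg (sub_nonneg.2 (hz i hi).1),
      Int.cast_le.2 (sub_le_sub_right (h0 ▸ (hz i hi).2) b)⟩
  have hstep : ∀ i < L, x i - x (i + 1) ≤ (x i - x (i + 1)) ^ 2 := fun i _ ↦ by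
    rw [hdiff]
    exact_mod_cast Int.le_self_sq _
  have hxsum : ∑ i ∈ range (L + 1), x i ≤ A := by
    rw [← Int.cast_sum, Int.cast_le]
    exact (sum_le_sum fun i _ ↦ sub_le_self (z i) hb).trans hsum
  have hmain := half_add_cube_div_le_sum_sq_sub (Int.cast_pos.2 hA) hx hxL hstep hxsum
  simpa only [hx0, hdiff, ← Int.cast_pow, ← Int.cast_sum] using hmain

end OrderedField

end Sequence

lemma sq_div_sqrt_le_half_add_cube_div {A D : ℝ} (hA : 0 < A) (hD : 0 ≤ D) :
    D ^ 2 / √(2 * A) ≤ D / 2 + D ^ 3 / (4 * A) := by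
  have : 0 < √(2 * A) := by positivity
  have hr2 : 4 * A = 2 * √(2 * A) ^ 2 := by rw [Real.sq_sqrt (by positivity)]; ring
  have hgap : D / 2 + D ^ 3 / (4 * A) - D ^ 2 / √(2 * A) = D / 2 * (1 - D / √(2 * A)) ^ 2 := by
    rw [hr2]
    field_simp
    ring
  have : 0 ≤ D / 2 * (1 - D / √(2 * A)) ^ 2 := by positivity
  linarith

section Walk

variable {V : Type*} {G : SimpleGraph V} {u v : V} {p : G.Walk u v}

lemma dist_getVert_of_length_eq_dist (hp : p.length = G.dist u v) {i : ℕ} (hi : i ≤ p.length) :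
    G.dist u (p.getVert i) = i := by
  rw [← SimpleGraph.length_eq_dist_of_subwalk hp (p.isSubwalk_take i),
    SimpleGraph.Walk.take_length, min_eq_left hi]

lemma card_filter_adj_getVert_le_three [DecidableRel G.Adj] (hp : p.length = G.dist u v) (w : V) :
    #{i ∈ range (p.length + 1) | G.Adj (p.getVert i) w} ≤ 3 := by
  have hsub : {i ∈ range (p.length + 1) | G.Adj (p.getVert i) w} ⊆
      Icc (G.dist u w - 1) (G.dist u w + 1) := by
    intro i hi
    obtain ⟨hi, hadj⟩ := mem_filter.1 hi
    have hdist := dist_getVert_of_length_eq_dist hp (Nat.lt_succ_iff.1 (mem_range.1 hi))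
    have := hadj.diff_dist_adj (u := u)
    rw [mem_Icc]
    omega
  calc
    _ ≤ #(Icc (G.dist u w - 1) (G.dist u w + 1)) := card_le_card hsub
    _ ≤ 3 := by rw [Nat.card_Icc]; omega

lemma sum_degree_getVert_le_three_mul_card [Fintype V] [DecidableRel G.Adj]
    (hp : p.length = G.dist u v) :
    ∑ i ∈ range (p.length + 1), G.degree (p.getVert i) ≤ 3 * Fintype.card V := by
  calc
    ∑ i ∈ range (p.length + 1), G.degree (p.getVert i)
      = ∑ i ∈ range (p.length + 1),
          #(univ.bipartiteAbove (fun i w ↦ G.Adj (p.getVert i) w) i) := by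
      simp only [bipartiteAbove, ← SimpleGraph.neighborFinset_eq_filter,
        SimpleGraph.card_neighborFinset_eq_degree]
    _ = ∑ w, #((range (p.length + 1)).bipartiteBelow (fun i w ↦ G.Adj (p.getVert i) w) w) :=
      sum_card_bipartiteAbove_eq_sum_card_bipartiteBelow _
    _ ≤ ∑ _w : V, 3 := sum_le_sum fun w _ ↦ card_filter_adj_getVert_le_three hp w
    _ = 3 * Fintype.card V := by rw [sum_const, card_univ, smul_eq_mul, mul_comm]

lemma sum_map_edges_eq_sum_range {M : Type*} [AddCommMonoid M] (p : G.Walk u v) (f : Sym2 V → M) :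
    (p.edges.map f).sum = ∑ i ∈ range p.length, f s(p.getVert i, p.getVert (i + 1)) := by
  induction p with
  | nil => simp
  | cons h p ih =>
    rw [SimpleGraph.Walk.length_cons, sum_range_succ', SimpleGraph.Walk.edges_cons, List.map_cons,
      List.sum_cons, ih, add_comm]
    simp only [SimpleGraph.Walk.getVert_cons_succ, SimpleGraph.Walk.getVert_zero]

lemma sum_range_le_sum_edgeFinset_of_isTrail {M : Type*} [AddCommMonoid M] [PartialOrder M]
    [IsOrderedAddMonoid M] [Fintype G.edgeSet] (hp : p.IsTrail) {f : Sym2 V → M}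
    (hf : ∀ e, 0 ≤ f e) :
    ∑ i ∈ range p.length, f s(p.getVert i, p.getVert (i + 1)) ≤ ∑ e ∈ G.edgeFinset, f e := by
  rw [← sum_map_edges_eq_sum_range, ← List.sum_toFinset f hp.edges_nodup]
  refine sum_le_sum_of_subset_of_nonneg (fun e he ↦ ?_) fun e _ _ ↦ hf e
  exact SimpleGraph.mem_edgeFinset.2 (p.edges_subset_edgeSet (List.mem_toFinset.1 he))

variable [Fintype V]

lemma sum_sq_degree_sub_le_sigmaE_of_isTrail (hp : p.IsTrail) :
    ∑ i ∈ range p.length,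
      ((G.degree (p.getVert i) : ℤ) - G.degree (p.getVert (i + 1))) ^ 2 ≤ sigmaE G :=
  sum_range_le_sum_edgeFinset_of_isTrail hp
    (f := Sym2.lift ⟨fun u v ↦ ((G.degree u : ℤ) - (G.degree v : ℤ)) ^ 2, fun _ _ ↦ by ring⟩)
    (Sym2.ind fun _ _ ↦ sq_nonneg _)

lemma half_add_cube_div_le_sigmaE (hp : p.length = G.dist u v)
    (hdeg : ∀ i ≤ p.length, G.degree (p.getVert i) ∈ Set.Icc (G.degree v) (G.degree u)) :
    ((G.degree u : ℝ) - G.degree v) / 2 +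
      ((G.degree u : ℝ) - G.degree v) ^ 3 / (4 * (3 * Fintype.card V)) ≤ sigmaE G := by
  let d : V → ℤ := fun w ↦ G.degree w
  have hbounds : ∀ i ≤ p.length, d (p.getVert i) ∈ Set.Icc (d v) (d u) := fun i hi ↦
    ⟨Int.ofNat_le.2 (hdeg i hi).1, Int.ofNat_le.2 (hdeg i hi).2⟩
  have : Nonempty V := ⟨u⟩
  have hsum : ∑ i ∈ range (p.length + 1), d (p.getVert i) ≤ 3 * Fintype.card V := by
    simp only [d]
    exact_mod_cast sum_degree_getVert_le_three_mul_card hp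
  have hseq := half_add_cube_div_le_intCast_sum_sq_sub (K := ℝ) (z := fun i ↦ d (p.getVert i))
    (congrArg d p.getVert_zero) (congrArg d p.getVert_length) (Int.natCast_nonneg _)
    (by positivity) hbounds hsum
  have hsigma : ∑ i ∈ range p.length, (d (p.getVert i) - d (p.getVert (i + 1))) ^ 2 ≤ sigmaE G :=
    sum_sq_degree_sub_le_sigmaE_of_isTrail (p.isPath_of_length_eq_dist hp).isTrail
  simpa only [d, Int.cast_natCast, Int.cast_mul, Int.cast_ofNat] using
    hseq.trans (Int.cast_le.2 hsigma)

end Walk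

theorem stmt12_general {V : Type*} [Fintype V] (G : SimpleGraph V) {u v : V}
    (huv : G.Reachable u v) :
    (sigmaE G : ℝ)
      ≥ ((G.degree u : ℝ) - (G.degree v : ℝ)) ^ 2 / Real.sqrt (6 * (Fintype.card V : ℝ)) := by
  let d : V → ℝ := fun w ↦ G.degree w
  obtain ⟨a, hua, hmax⟩ : ∃ a, G.Reachable u a ∧ ∀ w, G.Reachable u w → d w ≤ d a :=
    Set.exists_max_image {w | G.Reachable u w} d (Set.toFinite _) ⟨u, .rfl⟩
  obtain ⟨b, hub, hmin⟩ : ∃ b, G.Reachable u b ∧ ∀ w, G.Reachable u w → d b ≤ d w :=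
    Set.exists_min_image {w | G.Reachable u w} d (Set.toFinite _) ⟨u, .rfl⟩
  obtain ⟨p, hp⟩ := (hua.symm.trans hub).exists_walk_length_eq_dist
  have hdeg : ∀ i ≤ p.length, G.degree (p.getVert i) ∈ Set.Icc (G.degree b) (G.degree a) :=
    fun i _ ↦
      have hreach : G.Reachable u (p.getVert i) := hua.trans (p.take i).reachable
      ⟨Nat.cast_le.1 (hmin _ hreach), Nat.cast_le.1 (hmax _ hreach)⟩
  have hsq : (d u - d v) ^ 2 ≤ (d a - d b) ^ 2 :=
    sq_le_sq' (by linarith [hmax v huv, hmin u .rfl]) (sub_le_sub (hmax u .rfl) (hmin v huv))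
  have : Nonempty V := ⟨u⟩
  calc
    (d u - d v) ^ 2 / √(6 * Fintype.card V)
      = (d u - d v) ^ 2 / √(2 * (3 * Fintype.card V)) := by ring_nf
    _ ≤ (d a - d b) ^ 2 / √(2 * (3 * Fintype.card V)) := by gcongr
    _ ≤ (d a - d b) / 2 + (d a - d b) ^ 3 / (4 * (3 * Fintype.card V)) :=
      sq_div_sqrt_le_half_add_cube_div (by positivity) (sub_nonneg.2 (hmin a hua))
    _ ≤ sigmaE G := half_add_cube_div_le_sigmaE hp hdeg

/-- For every connected finite simple graph `G` of order `n` with maximum degree `Δ` and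
minimum degree `δ`, `σ(G) ≥ (Δ - δ)² / √(6n)`. -/
theorem stmt12 {V : Type*} [Fintype V] (G : SimpleGraph V) (hG : G.Connected) :
    (sigmaE G : ℝ)
      ≥ ((G.maxDegree : ℝ) - (G.minDegree : ℝ)) ^ 2
          / Real.sqrt (6 * (Fintype.card V : ℝ)) := by
  have : Nonempty V := hG.nonempty
  obtain ⟨u, hu⟩ := G.exists_maximal_degree_vertex
  obtain ⟨v, hv⟩ := G.exists_minimal_degree_vertex
  rw [hu, hv]
  exact stmt12_general G (hG u v)
end
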